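/- arXiv:1304.3223 — 2 statements merged into one kernel-verified Lean document; each statement's English description precedes it below -/
import Mathlib

section
/- For every real x, the function t ↦ t·(J_0(t)² + J_1(t)²) is differentiable at x with derivative J_0(x)² − J_1(x)² (i.e., HasDerivAt (fun t => t·(J_0(t)² + J_1(t)²)) (J_0(x)² − J_1(x)²) x). Consequently x ↦ x·(J_0(x)² + J_1(x)²) is an antiderivative of J_0² − J_1². -/
/-!
With `J₀' = -J₁` and `x J₁' = x J₀ - J₁`, the product rule gives
`(J₀² + J₁²) + 2x (-J₀ J₁) + 2 J₁ (x J₀ - J₁) = J₀² - J₁²`.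

Both relations come from differentiating the integral representation under the integral sign
(`hasDerivAt_besselJ`) and recognising the difference of the two sides as the integral of an exact
derivative whose primitive has equal values at `0` and `π`: a primitive of `u ↦ cos (x u)` composed
with `sin` for the first relation, and `sin (θ - x sin θ)` for the second.
-/

open Real

/-- Bessel function of the first kind of integer order `n`, via the
integral representation `J_n(x) = (1/π) ∫_0^π cos (n θ - x sin θ) dθ`. -/
noncomputable def besselJ (n : ℕ) (x : ℝ) : ℝ :=
  (1 / Real.pi) * ∫ θ in (0:ℝ)..Real.pi, Real.cos (n * θ - x * Real.sin θ)

/-- Differentiation of the integral representation under the integral sign. -/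
lemma hasDerivAt_besselJ (n : ℕ) (x : ℝ) :
    HasDerivAt (besselJ n)
      ((1 / Real.pi) * ∫ θ in (0:ℝ)..Real.pi, Real.sin θ * Real.sin (n * θ - x * Real.sin θ)) x := by
  refine HasDerivAt.const_mul _ ?_
  refine (intervalIntegral.hasDerivAt_integral_of_dominated_loc_of_deriv_le
    (F := fun x θ => Real.cos (n * θ - x * Real.sin θ))
    (F' := fun x θ => Real.sin θ * Real.sin (n * θ - x * Real.sin θ))
    (bound := fun _ => 1) Filter.univ_mem ?_ ?_ ?_ ?_ ?_ ?_).2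
  · exact Filter.Eventually.of_forall fun y =>
      Continuous.aestronglyMeasurable (by fun_prop)
  · exact Continuous.intervalIntegrable (by fun_prop) _ _
  · exact Continuous.aestronglyMeasurable (by fun_prop)
  · refine Filter.Eventually.of_forall fun θ _ y _ => ?_
    rw [Real.norm_eq_abs, abs_mul]
    exact mul_le_one₀ (Real.abs_sin_le_one _) (abs_nonneg _) (Real.abs_sin_le_one _)
  · exact intervalIntegrable_const
  · refine Filter.Eventually.of_forall fun θ _ y _ => ?_
    refine (((hasDerivAt_id' y).mul_const (Real.sin θ)).const_sub (n * θ)).cos.congr_deriv ?_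
    ring

/-- `J₀' = -J₁`. -/
lemma hasDerivAt_besselJ_zero (x : ℝ) : HasDerivAt (besselJ 0) (-besselJ 1 x) x := by
  refine (hasDerivAt_besselJ 0 x).congr_deriv ?_
  have h : ∫ θ in (0:ℝ)..Real.pi, Real.cos (x * Real.sin θ) * Real.cos θ = 0 := by
    have := intervalIntegral.integral_comp_mul_deriv (a := 0) (b := Real.pi)
      (f := Real.sin) (f' := Real.cos) (g := fun u => Real.cos (x * u))
      (fun θ _ => Real.hasDerivAt_sin θ) (by fun_prop) (by fun_prop)
    simpa using this
  have h2 : (∫ θ in (0:ℝ)..Real.pi, Real.cos (x * Real.sin θ) * Real.cos θ) =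
      (∫ θ in (0:ℝ)..Real.pi, Real.cos ((1 : ℕ) * θ - x * Real.sin θ)) +
      ∫ θ in (0:ℝ)..Real.pi, Real.sin θ * Real.sin ((0 : ℕ) * θ - x * Real.sin θ) := by
    rw [← intervalIntegral.integral_add (Continuous.intervalIntegrable (by fun_prop) _ _)
      (Continuous.intervalIntegrable (by fun_prop) _ _)]
    congr 1
    ext θ
    simp only [Nat.cast_one, Nat.cast_zero, one_mul, zero_mul, zero_sub, Real.sin_neg,
      Real.cos_sub]
    ring
  unfold besselJ
  linear_combination (1 / Real.pi) * (h - h2)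

/-- The relation `x J₁' = x J₀ - J₁`, with `J₁'` bound to a name so that no division by `x`
is needed. -/
lemma exists_hasDerivAt_besselJ_one (x : ℝ) :
    ∃ d, HasDerivAt (besselJ 1) d x ∧ x * d = x * besselJ 0 x - besselJ 1 x := by
  refine ⟨_, hasDerivAt_besselJ 1 x, ?_⟩
  have h : ∫ θ in (0:ℝ)..Real.pi, Real.cos (θ - x * Real.sin θ) * (1 - x * Real.cos θ) = 0 := by
    rw [intervalIntegral.integral_eq_sub_of_hasDerivAt
      (f := fun θ => Real.sin (θ - x * Real.sin θ))
      (f' := fun θ => Real.cos (θ - x * Real.sin θ) * (1 - x * Real.cos θ))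
      (fun θ _ => ((hasDerivAt_id' θ).fun_sub ((Real.hasDerivAt_sin θ).const_mul x)).sin)
      (Continuous.intervalIntegrable (by fun_prop) _ _)]
    simp
  have h2 : (∫ θ in (0:ℝ)..Real.pi, Real.cos (θ - x * Real.sin θ) * (1 - x * Real.cos θ)) =
      (x * ∫ θ in (0:ℝ)..Real.pi, Real.sin θ * Real.sin ((1 : ℕ) * θ - x * Real.sin θ)) -
      (x * ∫ θ in (0:ℝ)..Real.pi, Real.cos ((0 : ℕ) * θ - x * Real.sin θ)) +
      ∫ θ in (0:ℝ)..Real.pi, Real.cos ((1 : ℕ) * θ - x * Real.sin θ) := by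
    rw [← intervalIntegral.integral_const_mul, ← intervalIntegral.integral_const_mul,
      ← intervalIntegral.integral_sub (Continuous.intervalIntegrable (by fun_prop) _ _)
      (Continuous.intervalIntegrable (by fun_prop) _ _),
      ← intervalIntegral.integral_add (Continuous.intervalIntegrable (by fun_prop) _ _)
      (Continuous.intervalIntegrable (by fun_prop) _ _)]
    congr 1
    ext θ
    simp only [Nat.cast_one, Nat.cast_zero, one_mul, zero_mul, zero_sub, Real.cos_neg]
    -- Expand `cos (x sin θ)` as the cosine of the difference `θ - (θ - x sin θ)`.
    have e := Real.cos_sub θ (θ - x * Real.sin θ)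
    rw [sub_sub_cancel] at e
    rw [e]
    ring
  unfold besselJ
  linear_combination (1 / Real.pi) * (h - h2)

/-- `t ↦ t (J₀(t)² + J₁(t)²)` has derivative `J₀(x)² - J₁(x)²` at every `x`,
i.e. it is an antiderivative of `J₀² - J₁²`. -/
theorem hasDerivAt_mul_besselJ_sq (x : ℝ) :
    HasDerivAt (fun t : ℝ => t * (besselJ 0 t ^ 2 + besselJ 1 t ^ 2))
      (besselJ 0 x ^ 2 - besselJ 1 x ^ 2) x := by
  obtain ⟨d, hd, hxd⟩ := exists_hasDerivAt_besselJ_one x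
  refine ((hasDerivAt_id' x).fun_mul
    (((hasDerivAt_besselJ_zero x).fun_pow 2).fun_add (hd.fun_pow 2))).congr_deriv ?_
  push_cast
  linear_combination (2 * besselJ 1 x) * hxd
end

section
/- (Theorem 3.3, structure of the multi-frequency imaging function.) There exists a constant C > 0 such that for all real numbers r > 0 and 0 < k₁ < k_F with k₁·r ≥ 1, one has | (1/(k_F − k₁)) ∫_{k₁}^{k_F} J_0(k r)² dk − [ (k_F/(k_F − k₁))·(J_0(k_F r)² + J_1(k_F r)²) − (k₁/(k_F − k₁))·(J_0(k₁ r)² + J_1(k₁ r)²) ] | ≤ C·log(k_F/k₁) / (r·(k_F − k₁)). -/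
/-!
The relations `J₀' = -J₁` and `J₁' = J₀ - J₁ / x` give
`(x (J₀² + J₁²))' = J₀² - J₁²`, so the quantity inside the absolute value is exactly
`(1 / (k_F - k₁)) ∫ J₁(k r)² dk`. The bound therefore reduces to the decay estimate
`J₁(x)² ≤ C / x` for `x ≥ 1`.

The decay comes from the energy `F(x) = x (J₀² + J₁²) - J₀ J₁`, the correction `-J₀ J₁` being
chosen so that `F' = J₀ J₁ / x` has no term of order zero. For `x ≥ 1` one has
`F ≥ (x / 2) (J₀² + J₁²)`, hence `F' ≤ F / x²`; thus `F(x) exp(1 / x)` is nonincreasing and `F` is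
bounded on `[1, ∞)`.
-/

open Real

/-- Differentiation of the defining integral under the integral sign. -/
lemma besselJ_hasDerivAt (n : ℕ) (x : ℝ) :
    HasDerivAt (besselJ n)
      ((1 / π) * ∫ θ in (0:ℝ)..π, sin (n * θ - x * sin θ) * sin θ) x := by
  have h := intervalIntegral.hasDerivAt_integral_of_dominated_loc_of_deriv_le
    (μ := MeasureTheory.volume) (a := 0) (b := π) (x₀ := x) (s := Set.univ)
    (F := fun y θ => cos (n * θ - y * sin θ))
    (F' := fun y θ => sin (n * θ - y * sin θ) * sin θ) (bound := fun _ => 1)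
    Filter.univ_mem
    (Filter.Eventually.of_forall fun y => (by fun_prop : Continuous fun θ : ℝ =>
      cos (n * θ - y * sin θ)).aestronglyMeasurable)
    ((by fun_prop : Continuous fun θ : ℝ => cos (n * θ - x * sin θ)).intervalIntegrable _ _)
    ((by fun_prop : Continuous fun θ : ℝ =>
      sin (n * θ - x * sin θ) * sin θ).aestronglyMeasurable)
    (Filter.Eventually.of_forall fun θ _ y _ => by
      rw [norm_mul]
      exact mul_le_one₀ (abs_sin_le_one _) (norm_nonneg _) (abs_sin_le_one _))
    (by simp)
    (Filter.Eventually.of_forall fun θ _ y _ => by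
      have h1 : HasDerivAt (fun y : ℝ => n * θ - y * sin θ) (-sin θ) y := by
        simpa using ((hasDerivAt_id y).mul_const (sin θ)).const_sub (n * θ)
      exact h1.cos.congr_deriv (by ring))
  exact h.2.const_mul (1 / π)

lemma besselJ_continuous (n : ℕ) : Continuous (besselJ n) :=
  continuous_iff_continuousAt.2 fun x => (besselJ_hasDerivAt n x).continuousAt

/-- `J₀' = -J₁`: the integrands differ by the `θ`-derivative of `sin (x sin θ) / x`, which vanishes
at both endpoints. -/
lemma besselJ_zero_hasDerivAt {x : ℝ} (hx : x ≠ 0) :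
    HasDerivAt (besselJ 0) (-besselJ 1 x) x := by
  convert besselJ_hasDerivAt 0 x using 1
  have key : ∫ θ in (0:ℝ)..π, (cos ((1:ℕ) * θ - x * sin θ)
      + sin ((0:ℕ) * θ - x * sin θ) * sin θ) = 0 := by
    rw [intervalIntegral.integral_eq_sub_of_hasDerivAt (f := fun θ => sin (x * sin θ) / x)]
    · simp
    · intro θ _
      have h1 : HasDerivAt (fun θ : ℝ => sin (x * sin θ) / x)
        (cos (x * sin θ) * (x * cos θ) / x) θ :=
        ((hasDerivAt_sin θ).const_mul x).sin.div_const x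
      refine h1.congr_deriv ?_
      simp only [Nat.cast_one, Nat.cast_zero, one_mul, zero_mul, zero_sub, sin_neg, cos_sub]
      field_simp
      ring
    · exact (by fun_prop : Continuous _).intervalIntegrable _ _
  rw [intervalIntegral.integral_add
    ((by fun_prop : Continuous _).intervalIntegrable _ _)
    ((by fun_prop : Continuous _).intervalIntegrable _ _)] at key
  rw [besselJ]
  linear_combination (-(1 / π)) * key

/-- `J₁' = J₀ - J₁ / x`: the integrands differ by the `θ`-derivative of
`(sin θ cos (x sin θ) - cos θ sin (x sin θ)) / x`, which vanishes at both endpoints. -/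
lemma besselJ_one_hasDerivAt {x : ℝ} (hx : x ≠ 0) :
    HasDerivAt (besselJ 1) (besselJ 0 x - besselJ 1 x / x) x := by
  convert besselJ_hasDerivAt 1 x using 1
  have key : ∫ θ in (0:ℝ)..π, (sin ((1:ℕ) * θ - x * sin θ) * sin θ
      - cos ((0:ℕ) * θ - x * sin θ) + cos ((1:ℕ) * θ - x * sin θ) / x) = 0 := by
    rw [intervalIntegral.integral_eq_sub_of_hasDerivAt
      (f := fun θ => (sin θ * cos (x * sin θ) - cos θ * sin (x * sin θ)) / x)]
    · simp
    · intro θ _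
      have h0 := (hasDerivAt_sin θ).const_mul x
      have h1 := (((hasDerivAt_sin θ).mul h0.cos).sub ((hasDerivAt_cos θ).mul h0.sin)).div_const x
      refine h1.congr_deriv ?_
      simp only [Nat.cast_one, Nat.cast_zero, one_mul, zero_mul, zero_sub, cos_neg, cos_sub,
        sin_sub]
      field_simp
      linear_combination (-x) * cos (x * sin θ) * sin_sq_add_cos_sq θ
    · exact (by fun_prop : Continuous _).intervalIntegrable _ _
  rw [intervalIntegral.integral_add
    ((by fun_prop : Continuous _).intervalIntegrable _ _)
    ((by fun_prop : Continuous _).intervalIntegrable _ _), intervalIntegral.integral_sub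
    ((by fun_prop : Continuous _).intervalIntegrable _ _)
    ((by fun_prop : Continuous _).intervalIntegrable _ _),
    intervalIntegral.integral_div] at key
  rw [besselJ, besselJ]
  linear_combination (-(1 / π)) * key

/-- The corrected energy `x (J₀² + J₁²) - J₀ J₁`. -/
noncomputable def besselEnergy (x : ℝ) : ℝ :=
  x * (besselJ 0 x ^ 2 + besselJ 1 x ^ 2) - besselJ 0 x * besselJ 1 x

lemma besselEnergy_hasDerivAt {x : ℝ} (hx : x ≠ 0) :
    HasDerivAt besselEnergy (besselJ 0 x * besselJ 1 x / x) x := by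
  have h0 := besselJ_zero_hasDerivAt hx
  have h1 := besselJ_one_hasDerivAt hx
  have h := ((hasDerivAt_id x).mul ((h0.pow 2).add (h1.pow 2))).sub (h0.mul h1)
  refine h.congr_deriv ?_
  simp
  field_simp
  ring

lemma le_besselEnergy {x : ℝ} (hx : 1 ≤ x) :
    x / 2 * (besselJ 0 x ^ 2 + besselJ 1 x ^ 2) ≤ besselEnergy x := by
  unfold besselEnergy
  nlinarith [sq_nonneg (besselJ 0 x - besselJ 1 x),
    mul_nonneg (sub_nonneg.2 hx) (add_nonneg (sq_nonneg (besselJ 0 x)) (sq_nonneg (besselJ 1 x)))]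

/-- Grönwall's argument for `F' ≤ F / x²`. -/
lemma besselEnergy_le {x : ℝ} (hx : 1 ≤ x) : besselEnergy x ≤ besselEnergy 1 * exp 1 := by
  have hd : ∀ y : ℝ, 1 ≤ y → HasDerivAt (fun y => besselEnergy y * exp y⁻¹)
      (besselJ 0 y * besselJ 1 y / y * exp y⁻¹
        + besselEnergy y * (exp y⁻¹ * (-(y ^ 2)⁻¹))) y := fun y hy => by
    have hy0 : y ≠ 0 := by positivity
    exact (besselEnergy_hasDerivAt hy0).mul (hasDerivAt_inv hy0).exp
  have hanti : AntitoneOn (fun y => besselEnergy y * exp y⁻¹) (Set.Ici 1) := by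
    refine antitoneOn_of_deriv_nonpos (convex_Ici 1)
      (fun y hy => (hd y hy).continuousAt.continuousWithinAt)
      (fun y hy => (hd y (interior_subset hy)).differentiableAt.differentiableWithinAt) ?_
    intro y hy
    have hy1 : 1 ≤ y := interior_subset hy
    have hy0 : 0 < y := by positivity
    rw [(hd y hy1).deriv]
    have h1 : besselJ 0 y * besselJ 1 y / y ≤ besselEnergy y / y ^ 2 := by
      rw [div_le_div_iff₀ hy0 (by positivity)]
      have := le_besselEnergy hy1
      nlinarith [mul_nonneg (sq_nonneg y) (sq_nonneg (besselJ 0 y - besselJ 1 y)),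
        mul_le_mul_of_nonneg_right this hy0.le]
    have h2 := mul_le_mul_of_nonneg_right h1 (exp_pos y⁻¹).le
    rw [div_eq_mul_inv (besselEnergy y)] at h2
    linarith
  have h := hanti (Set.self_mem_Ici) hx hx
  simp only [inv_one] at h
  have hE : 0 ≤ besselEnergy x := le_trans (by positivity) (le_besselEnergy hx)
  have h1 : 1 ≤ exp x⁻¹ := one_le_exp (by positivity)
  nlinarith

lemma besselJ_one_sq_le {x : ℝ} (hx : 1 ≤ x) :
    besselJ 1 x ^ 2 ≤ 2 * (besselEnergy 1 * exp 1) / x := by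
  have hx0 : 0 < x := by positivity
  rw [le_div_iff₀ hx0]
  nlinarith [le_besselEnergy hx, besselEnergy_le hx, mul_nonneg hx0.le (sq_nonneg (besselJ 0 x))]

/-- Theorem 3.3 (structure of the multi-frequency imaging function):
there is `C > 0` such that for `r > 0` and `0 < k₁ < k_F` with `k₁ r ≥ 1`,
`| (1/(k_F-k₁)) ∫_{k₁}^{k_F} J₀(kr)² dk
   - [ (k_F/(k_F-k₁)) (J₀(k_F r)² + J₁(k_F r)²)
       - (k₁/(k_F-k₁)) (J₀(k₁ r)² + J₁(k₁ r)²) ] |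
  ≤ C log (k_F/k₁) / (r (k_F - k₁))`. -/
theorem multi_frequency_imaging :
    ∃ C > 0, ∀ r k₁ kF : ℝ, 0 < r → 0 < k₁ → k₁ < kF → 1 ≤ k₁ * r →
      |(1 / (kF - k₁)) * ∫ k in k₁..kF, besselJ 0 (k * r) ^ 2
          - ((kF / (kF - k₁)) * (besselJ 0 (kF * r) ^ 2 + besselJ 1 (kF * r) ^ 2)
              - (k₁ / (kF - k₁)) * (besselJ 0 (k₁ * r) ^ 2 + besselJ 1 (k₁ * r) ^ 2))|
        ≤ C * Real.log (kF / k₁) / (r * (kF - k₁)) := by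
  have hE : 0 ≤ besselEnergy 1 := le_trans (by positivity) (le_besselEnergy le_rfl)
  -- The decay constant is only known to be nonnegative; adding 1 makes it positive.
  refine ⟨2 * (besselEnergy 1 * exp 1) + 1, by positivity, ?_⟩
  intro r k₁ kF hr hk₁ hlt hk₁r
  set C := 2 * (besselEnergy 1 * exp 1) + 1 with hC
  have hd : 0 < kF - k₁ := sub_pos.2 hlt
  have c0 : Continuous fun k => besselJ 0 (k * r) ^ 2 :=
    ((besselJ_continuous 0).comp (by fun_prop)).pow 2
  have c1 : Continuous fun k => besselJ 1 (k * r) ^ 2 :=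
    ((besselJ_continuous 1).comp (by fun_prop)).pow 2
  have ftc : ∫ k in k₁..kF, (besselJ 0 (k * r) ^ 2 - besselJ 1 (k * r) ^ 2) =
      kF * (besselJ 0 (kF * r) ^ 2 + besselJ 1 (kF * r) ^ 2)
        - k₁ * (besselJ 0 (k₁ * r) ^ 2 + besselJ 1 (k₁ * r) ^ 2) := by
    refine intervalIntegral.integral_eq_sub_of_hasDerivAt
      (f := fun k => k * (besselJ 0 (k * r) ^ 2 + besselJ 1 (k * r) ^ 2)) ?_
      ((c0.sub c1).intervalIntegrable _ _)
    intro k hk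
    rw [Set.uIcc_of_le hlt.le] at hk
    have hk0 : 0 < k := hk₁.trans_le hk.1
    have hkr : k * r ≠ 0 := by positivity
    have hm : HasDerivAt (fun k : ℝ => k * r) r k := by
      simpa using (hasDerivAt_id k).mul_const r
    have h0 := HasDerivAt.comp k (besselJ_zero_hasDerivAt hkr) hm
    have h1 := HasDerivAt.comp k (besselJ_one_hasDerivAt hkr) hm
    have h := (hasDerivAt_id k).mul ((h0.pow 2).add (h1.pow 2))
    refine h.congr_deriv ?_
    simp
    field_simp
    ring
  rw [intervalIntegral.integral_sub (c0.intervalIntegrable _ _) (c1.intervalIntegrable _ _)] at ftc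
  have eq : (1 / (kF - k₁)) * (∫ k in k₁..kF, besselJ 0 (k * r) ^ 2)
          - ((kF / (kF - k₁)) * (besselJ 0 (kF * r) ^ 2 + besselJ 1 (kF * r) ^ 2)
              - (k₁ / (kF - k₁)) * (besselJ 0 (k₁ * r) ^ 2 + besselJ 1 (k₁ * r) ^ 2))
      = (∫ k in k₁..kF, besselJ 1 (k * r) ^ 2) / (kF - k₁) := by
    rw [sub_eq_iff_eq_add] at ftc
    rw [ftc]
    ring
  have hnn : 0 ≤ ∫ k in k₁..kF, besselJ 1 (k * r) ^ 2 :=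
    intervalIntegral.integral_nonneg hlt.le fun _ _ => sq_nonneg _
  have hle : ∫ k in k₁..kF, besselJ 1 (k * r) ^ 2 ≤ C / r * log (kF / k₁) := by
    rw [← integral_one_div_of_pos hk₁ (hk₁.trans hlt), ← intervalIntegral.integral_const_mul]
    refine intervalIntegral.integral_mono_on hlt.le (c1.intervalIntegrable _ _) ?_ ?_
    · refine (intervalIntegral.intervalIntegrable_one_div (fun k hk => ?_)
        continuousOn_id).const_mul _
      rw [Set.uIcc_of_le hlt.le] at hk
      exact (hk₁.trans_le hk.1).ne'
    · intro k hk
      have hk0 : 0 < k := hk₁.trans_le hk.1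
      have hkr : 1 ≤ k * r := hk₁r.trans (mul_le_mul_of_nonneg_right hk.1 hr.le)
      calc besselJ 1 (k * r) ^ 2 ≤ 2 * (besselEnergy 1 * exp 1) / (k * r) := besselJ_one_sq_le hkr
        _ ≤ C / (k * r) := by gcongr; linarith
        _ = C / r * (1 / k) := by field_simp
  -- In the goal the integrand extends over the whole difference, bracket included; the bracket does
  -- not depend on `k`, so integrating it and dividing by `kF - k₁` returns it unchanged.
  rw [intervalIntegral.integral_sub (c0.intervalIntegrable _ _) intervalIntegrable_const,
    intervalIntegral.integral_const, smul_eq_mul, mul_sub, ← mul_assoc,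
    one_div_mul_cancel hd.ne', one_mul, eq, abs_of_nonneg (div_nonneg hnn hd.le), ← div_div]
  gcongr
  exact hle.trans_eq (by ring)
end
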